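/- (Lorentzian Lamarle formula for timelike ruled surfaces with timelike base curve and spacelike ruling, Theorem 6.1.) Let e, n, ξ, κ, τ, σ be a frame system of type {space, space, time} along an interval I with κ, τ, σ differentiable, β the striction curve with β' = sinh σ · e + cosh σ · ξ, and φ(u,v) = β(u) + v·e(u). Fix (u,v) with cosh²σ(u) − v²κ(u)² > 0, and let η = (φ_u ∧ φ_v)/‖φ_u ∧ φ_v‖ be the unit normal. Then the Gaussian curvature K = (g(φ_uu,η)·g(φ_vv,η) − g(φ_uv,η)²) / (g(φ_u,φ_u)·g(φ_v,φ_v) − g(φ_u,φ_v)²) satisfies K = κ(u)² cosh²σ(u)/(cosh²σ(u) − v²κ(u)²)²; equivalently, with distribution parameter P = cosh σ(u)/κ(u), K = P²/(P² − v²)². -/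

import Mathlib

noncomputable section

/-- Lorentz metric on ℝ³: g(v,w) = v₁w₁ + v₂w₂ − v₃w₃. -/
def lg (v w : Fin 3 → ℝ) : ℝ := v 0 * w 0 + v 1 * w 1 - v 2 * w 2

/-- Lorentzian cross product: v ∧ w = (v₃w₂ − v₂w₃, v₁w₃ − v₃w₁, v₁w₂ − v₂w₁). -/
def lcross (v w : Fin 3 → ℝ) : Fin 3 → ℝ :=
  ![v 2 * w 1 - v 1 * w 2, v 0 * w 2 - v 2 * w 0, v 0 * w 1 - v 1 * w 0]

/-- Determinant of the 3×3 matrix with rows a, b, c. -/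
def ldet (a b c : Fin 3 → ℝ) : ℝ :=
  Matrix.det !![a 0, a 1, a 2; b 0, b 1, b 2; c 0, c 1, c 2]

/-!
For a ruled surface `φ_vv = 0`, so only `g(φ_uv, η)` survives in the second fundamental form, while
by Lagrange's identity the determinant of the first one is `-g(c, c)` with `c = φ_u ∧ φ_v`. Hence
`|K| = (g(φ_uv, c) / g(c, c))²`, with the sign of `g(c, c)`. With `ξ = e ∧ n`, expanding the triple
product gives `c = -(cosh σ • n + v κ • ξ)`, whence `g(c, c) = cosh² σ - v² κ²` and
`g(φ_uv, c) = -κ cosh σ`.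
-/

section LorentzAlgebra

variable (a : ℝ) (v w x y : Fin 3 → ℝ)

lemma lg_comm : lg v w = lg w v := by
  simp only [lg]
  ring

lemma lg_add_left : lg (v + w) x = lg v x + lg w x := by
  simp only [lg, Pi.add_apply]
  ring

lemma lg_smul_left : lg (a • v) w = a * lg v w := by
  simp only [lg, Pi.smul_apply, smul_eq_mul]
  ring

lemma lg_add_right : lg v (w + x) = lg v w + lg v x := by
  simp only [lg_comm v, lg_add_left]

lemma lg_smul_right : lg v (a • w) = a * lg v w := by
  simp only [lg_comm v, lg_smul_left]

lemma lg_zero_left : lg 0 v = 0 := by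
  simp [lg]

lemma lcross_add_left : lcross (v + w) x = lcross v x + lcross w x := by
  ext i
  fin_cases i <;> simp only [lcross, Pi.add_apply, Fin.reduceFinMk, Matrix.cons_val] <;> ring

lemma lcross_smul_left : lcross (a • v) w = a • lcross v w := by
  ext i
  fin_cases i <;>
    simp only [lcross, Pi.smul_apply, smul_eq_mul, Fin.reduceFinMk, Matrix.cons_val] <;> ring

lemma lcross_anticomm : lcross v w = -lcross w v := by
  ext i
  fin_cases i <;> simp only [lcross, Pi.neg_apply, Fin.reduceFinMk, Matrix.cons_val] <;> ring

lemma lcross_self : lcross v v = 0 := by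
  ext i
  fin_cases i <;> simp [lcross, mul_comm]

lemma lg_lcross_self_right : lg w (lcross v w) = 0 := by
  simp only [lg, lcross, Matrix.cons_val]
  ring

lemma lcross_lcross : lcross (lcross v w) x = lg w x • v - lg v x • w := by
  ext i
  fin_cases i <;>
    simp only [lcross, lg, Pi.sub_apply, Pi.smul_apply, smul_eq_mul, Fin.reduceFinMk,
      Matrix.cons_val] <;> ring

lemma lg_lcross_lcross :
    lg (lcross v w) (lcross x y) = lg v y * lg w x - lg v x * lg w y := by
  simp only [lg, lcross, Matrix.cons_val]
  ring

end LorentzAlgebra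

/-- The unit normal `(φu ∧ φv) / ‖φu ∧ φv‖` of a surface patch with tangent vectors `φu`, `φv`; it
is the junk value `0` where `φu ∧ φv` is a null vector. -/
def lorentzUnitNormal (φu φv : Fin 3 → ℝ) : Fin 3 → ℝ :=
  (Real.sqrt |lg (lcross φu φv) (lcross φu φv)|)⁻¹ • lcross φu φv

/-- The Gaussian curvature of a surface patch at a point, as a function of the partial derivatives
of the parametrization there. It is the quotient of the determinants of the two fundamental forms,
without the factor `g(η, η) = ±1` that some authors include. -/
def lorentzGaussCurvature (φu φv φuu φuv φvv : Fin 3 → ℝ) : ℝ :=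
  (lg φuu (lorentzUnitNormal φu φv) * lg φvv (lorentzUnitNormal φu φv)
      - lg φuv (lorentzUnitNormal φu φv) ^ 2)
    / (lg φu φu * lg φv φv - lg φu φv ^ 2)

lemma lg_lorentzUnitNormal_sq (φu φv w : Fin 3 → ℝ) :
    lg w (lorentzUnitNormal φu φv) ^ 2
      = lg w (lcross φu φv) ^ 2 / |lg (lcross φu φv) (lcross φu φv)| := by
  rw [lorentzUnitNormal, lg_smul_right, mul_pow, inv_pow, Real.sq_sqrt (abs_nonneg _),
    inv_mul_eq_div]

lemma lorentzGaussCurvature_of_ruled {φu φv : Fin 3 → ℝ} (φuu φuv : Fin 3 → ℝ)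
    (hreg : lg (lcross φu φv) (lcross φu φv) ≠ 0) :
    lorentzGaussCurvature φu φv φuu φuv 0
      = Real.sign (lg (lcross φu φv) (lcross φu φv))
        * (lg φuv (lcross φu φv) ^ 2 / lg (lcross φu φv) (lcross φu φv) ^ 2) := by
  have lagrange : lg φu φu * lg φv φv - lg φu φv ^ 2 = -lg (lcross φu φv) (lcross φu φv) := by
    rw [lg_lcross_lcross, lg_comm φv φu]
    ring
  rw [lorentzGaussCurvature, lg_zero_left, lagrange, lg_lorentzUnitNormal_sq]
  rcases hreg.lt_or_gt with hneg | hpos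
  · rw [abs_of_neg hneg, Real.sign_of_neg hneg]
    field_simp
    ring
  · rw [abs_of_pos hpos, Real.sign_of_pos hpos]
    field_simp
    ring

section OrthonormalPair

variable {e n : Fin 3 → ℝ}

lemma lcross_smul_add_smul_lcross_add_smul_left (hee : lg e e = 1) (hen : lg e n = 0) (a b c : ℝ) :
    lcross (a • e + b • lcross e n + c • n) e = (-b) • n + (-c) • lcross e n := by
  have hξe : lcross (lcross e n) e = -n := by
    rw [lcross_lcross, lg_comm n e, hen, hee, zero_smul, one_smul, zero_sub]
  rw [lcross_add_left, lcross_add_left, lcross_smul_left, lcross_smul_left, lcross_smul_left,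
    lcross_self, hξe, lcross_anticomm n e]
  module

lemma lg_self_smul_add_smul_lcross (hee : lg e e = 1) (hnn : lg n n = 1) (hen : lg e n = 0)
    (b c : ℝ) :
    lg (b • n + c • lcross e n) (b • n + c • lcross e n) = b ^ 2 - c ^ 2 := by
  have hξξ : lg (lcross e n) (lcross e n) = -1 := by
    rw [lg_lcross_lcross, lg_comm n e, hee, hnn, hen]
    norm_num
  simp only [lg_add_left, lg_add_right, lg_smul_left, lg_smul_right, hnn, hξξ,
    lg_lcross_self_right, lg_comm (lcross e n) n]
  ring

end OrthonormalPair

-- The sign is `g(η, η)`: it is `1` where the surface is timelike and `-1` where it is spacelike.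
theorem stmt16_general {e n e' β' : Fin 3 → ℝ} {κ σ v : ℝ} (φuu : Fin 3 → ℝ) (hκ : κ ≠ 0)
    (hee : lg e e = 1) (hnn : lg n n = 1) (hen : lg e n = 0) (he' : e' = κ • n)
    (hβ' : β' = Real.sinh σ • e + Real.cosh σ • lcross e n)
    (hreg : Real.cosh σ ^ 2 - v ^ 2 * κ ^ 2 ≠ 0) :
    let K := lorentzGaussCurvature (β' + v • e') e φuu e' 0
    let ε := Real.sign (Real.cosh σ ^ 2 - v ^ 2 * κ ^ 2)
    K = ε * (κ ^ 2 * Real.cosh σ ^ 2 / (Real.cosh σ ^ 2 - v ^ 2 * κ ^ 2) ^ 2)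
      ∧ K = ε * ((Real.cosh σ / κ) ^ 2 / ((Real.cosh σ / κ) ^ 2 - v ^ 2) ^ 2) := by
  intro K ε
  have hc : lcross (β' + v • e') e = (-Real.cosh σ) • n + (-(v * κ)) • lcross e n := by
    rw [hβ', he', smul_smul, lcross_smul_add_smul_lcross_add_smul_left hee hen]
  have hcc : lg (lcross (β' + v • e') e) (lcross (β' + v • e') e)
      = Real.cosh σ ^ 2 - v ^ 2 * κ ^ 2 := by
    rw [hc, lg_self_smul_add_smul_lcross hee hnn hen]
    ring
  have huvc : lg e' (lcross (β' + v • e') e) = -(κ * Real.cosh σ) := by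
    rw [hc, he', lg_smul_left, lg_add_right, lg_smul_right, lg_smul_right, hnn,
      lg_lcross_self_right]
    ring
  have hK : K = ε * (κ ^ 2 * Real.cosh σ ^ 2 / (Real.cosh σ ^ 2 - v ^ 2 * κ ^ 2) ^ 2) := by
    rw [← hcc] at hreg
    simp only [K, ε, lorentzGaussCurvature_of_ruled _ _ hreg, hcc, huvc, neg_sq, mul_pow]
  have hP : (Real.cosh σ / κ) ^ 2 - v ^ 2 = (Real.cosh σ ^ 2 - v ^ 2 * κ ^ 2) / κ ^ 2 := by
    field_simp
  refine ⟨hK, ?_⟩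
  rw [hK, hP]
  congr 1
  field_simp

/-- Lorentzian Lamarle formula for M₃ (Theorem 6.1):
K = κ² cosh²σ /(cosh²σ − v²κ²)² = P²/(P² − v²)² with P = cosh σ / κ. -/
theorem stmt16
    (I : Set ℝ) (hI : IsOpen I)
    (e n ξ β : ℝ → Fin 3 → ℝ) (κ τ σ : ℝ → ℝ)
    (hde : ∀ u ∈ I, DifferentiableAt ℝ e u)
    (hdn : ∀ u ∈ I, DifferentiableAt ℝ n u)
    (hdξ : ∀ u ∈ I, DifferentiableAt ℝ ξ u)
    (hdβ : ∀ u ∈ I, DifferentiableAt ℝ β u)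
    (hκ0 : ∀ u ∈ I, κ u ≠ 0)
    (hee : ∀ u ∈ I, lg (e u) (e u) = 1)
    (hnn : ∀ u ∈ I, lg (n u) (n u) = 1)
    (hξξ : ∀ u ∈ I, lg (ξ u) (ξ u) = -1)
    (hen : ∀ u ∈ I, lg (e u) (n u) = 0)
    (hnξ : ∀ u ∈ I, lg (n u) (ξ u) = 0)
    (hξe : ∀ u ∈ I, lg (ξ u) (e u) = 0)
    (hc1 : ∀ u ∈ I, lcross (e u) (n u) = ξ u)
    (hc2 : ∀ u ∈ I, lcross (n u) (ξ u) = -e u)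
    (hc3 : ∀ u ∈ I, lcross (ξ u) (e u) = -n u)
    (hfe : ∀ u ∈ I, deriv e u = κ u • n u)
    (hfn : ∀ u ∈ I, deriv n u = (-(κ u)) • e u + τ u • ξ u)
    (hfξ : ∀ u ∈ I, deriv ξ u = τ u • n u)
    (hβ' : ∀ u ∈ I, deriv β u = Real.sinh (σ u) • e u + Real.cosh (σ u) • ξ u)
    (hdκ : ∀ u ∈ I, DifferentiableAt ℝ κ u)
    (hdτ : ∀ u ∈ I, DifferentiableAt ℝ τ u)
    (hdσ : ∀ u ∈ I, DifferentiableAt ℝ σ u)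
    (hd2e : ∀ u ∈ I, DifferentiableAt ℝ (deriv e) u)
    (hd2β : ∀ u ∈ I, DifferentiableAt ℝ (deriv β) u) :
    ∀ u ∈ I, ∀ v : ℝ,
      (0 : ℝ) < (Real.cosh (σ u)) ^ 2 - v ^ 2 * (κ u) ^ 2 →
      let φu := deriv β u + v • deriv e u
      let φv := e u
      let φuu := deriv (deriv β) u + v • deriv (deriv e) u
      let φuv := deriv e u
      let φvv : Fin 3 → ℝ := 0
      let c := lcross φu φv
      let η := (Real.sqrt |lg c c|)⁻¹ • c
      let K := (lg φuu η * lg φvv η - (lg φuv η) ^ 2)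
                / (lg φu φu * lg φv φv - (lg φu φv) ^ 2)
      K = (κ u) ^ 2 * (Real.cosh (σ u)) ^ 2
            / ((Real.cosh (σ u)) ^ 2 - v ^ 2 * (κ u) ^ 2) ^ 2
      ∧ K = (Real.cosh (σ u) / κ u) ^ 2
            / ((Real.cosh (σ u) / κ u) ^ 2 - v ^ 2) ^ 2 := by
  intro u hu v hD
  simpa only [lorentzGaussCurvature, lorentzUnitNormal, Real.sign_of_pos hD, one_mul] using
    stmt16_general (deriv (deriv β) u + v • deriv (deriv e) u) (hκ0 u hu) (hee u hu) (hnn u hu)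
      (hen u hu) (hfe u hu) ((hc1 u hu).symm ▸ hβ' u hu) hD.ne'
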